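/- For every sentence J, the colored dual immaculate function expands positively into the colored fundamental basis as 𝔖*_J = Σ_C L_{J,C} F_C, where the sum runs over all sentences C with |C| = |J| and L_{J,C} is the number of standard colored immaculate tableaux of shape J with colored descent composition C; equivalently, 𝔖*_J = Σ_U F_{co_A(U)}, summed over all standard colored immaculate tableaux U of shape J. -/

import Mathlib

open scoped BigOperators

namespace ColoredImm

variable {A : Type*}

/-- A *weak sentence* over the alphabet `A`: a finite list of words (words may be empty). -/
abbrev Sentence (A : Type*) := List (List A)

/-- A genuine *sentence*: all of its words are nonempty. -/
def IsSentence (I : Sentence A) : Prop := ∀ w ∈ I, w ≠ []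

/-- The size `|I|` of a sentence: its total number of letters. -/
def size (I : Sentence A) : ℕ := (I.map List.length).sum

/-- The word lengths `wℓ(I)` of a sentence. -/
def wl (I : Sentence A) : List ℕ := I.map List.length

/-- The flattening of a weak sentence: delete all empty words. -/
def flattenWS (I : Sentence A) : Sentence A := I.filter (fun w => !w.isEmpty)

/-- `Refines J I` means `J ⪯ I`: the sentence `I` can be obtained by concatenating
some adjacent words of `J` (so `J` is a refinement of `I`, and `I` a coarsening of `J`). -/
def Refines (J I : Sentence A) : Prop :=
  ∃ P : List (Sentence A), (∀ p ∈ P, p ≠ []) ∧ P.flatten = J ∧ P.map List.flatten = I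

/-! ### Fillings and colored immaculate tableaux -/

/-- An integer filling of a diagram, recorded row by row. -/
abbrev Filling := List (List ℕ)

/-- The entry of a filling at box `b = (row, column)` (0-indexed), with default `0`. -/
def entryAt (f : Filling) (b : ℕ × ℕ) : ℕ := (f.getD b.1 []).getD b.2 0

/-- `IsCIT I f`: `f` is a colored immaculate tableau of shape `I`; that is, `f` has the
same shape as the colored composition diagram of `I`, its entries are positive integers
weakly increasing left to right along each row, and the entries in the first column are
strictly increasing from top to bottom. -/
def IsCIT (I : Sentence A) (f : Filling) : Prop :=
  f.map List.length = I.map List.length ∧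
  (∀ row ∈ f, row.Chain' (· ≤ ·)) ∧
  (f.filterMap List.head?).Chain' (· < ·) ∧
  (∀ x ∈ f.flatten, 1 ≤ x)

/-- The colors (letters of `w`) of the boxes of one row whose entry (in `row`) is `v`,
read from left to right. -/
def rowWith (w : List A) (row : List ℕ) (v : ℕ) : List A :=
  ((w.zip row).filter (fun p => p.2 == v)).map Prod.fst

/-- The word of the type of a tableau at value `v`: the colors of all boxes with entry `v`,
read left to right, from the bottom row up to the top row. -/
def typeWord (I : Sentence A) (f : Filling) (v : ℕ) : List A :=
  (((I.zip f).reverse).map (fun p => rowWith p.1 p.2 v)).flatten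

/-- `HasType I f B` : the tableau `f` (of shape `I`) has type the weak sentence `B`,
i.e. for every positive integer `v`, the colors of the boxes of `f` containing `v`
(read left to right, bottom to top) form the `v`-th word of `B`. -/
def HasType (I : Sentence A) (f : Filling) (B : Sentence A) : Prop :=
  ∀ v, 1 ≤ v → typeWord I f v = B.getD (v - 1) []

/-- `K_{J,B}`: the number of colored immaculate tableaux of shape `J` and type `B`. -/
noncomputable def KJB (J B : Sentence A) : ℕ :=
  Set.ncard {f : Filling | IsCIT J f ∧ HasType J f B}

/-! ### Standardization -/

/-- The list of boxes of a filling. -/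
def boxes (f : Filling) : List (ℕ × ℕ) :=
  ((List.range f.length).map
    (fun r => (List.range (f.getD r []).length).map (fun j => (r, j)))).flatten

/-- `beforeB f b b'`: box `b` comes strictly before box `b'` in the type-reading order of `f`
(smaller entries first; among equal entries, lower rows first, and within a row left to right). -/
def beforeB (f : Filling) (b b' : ℕ × ℕ) : Bool :=
  entryAt f b < entryAt f b' ||
    (entryAt f b == entryAt f b' && (b'.1 < b.1 || (b.1 == b'.1 && b.2 < b'.2)))

/-- The standardization of a filling: each box is renumbered (starting from `1`)
according to its position in the type-reading order. -/
def stdFill (f : Filling) : Filling :=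
  (List.range f.length).map (fun r =>
    (List.range (f.getD r []).length).map (fun j =>
      1 + ((boxes f).filter (fun b' => beforeB f b' (r, j))).length))

/-- The number of boxes of a filling. -/
def nBoxes (f : Filling) : ℕ := f.flatten.length

/-- A filling of `n` boxes is standard when its entries are exactly `1, …, n`,
each appearing once. -/
def IsStandardF (f : Filling) : Prop := f.flatten.Perm (List.range' 1 (nBoxes f))

/-! ### Descents and the colored descent composition -/

/-- The (0-indexed) row containing the value `v` in a standard filling. -/
def rowOf (f : Filling) (v : ℕ) : ℕ := f.findIdx (fun row => row.contains v)

/-- The sorted list of descents of a standard filling: those `i` with `1 ≤ i ≤ n-1`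
such that `i+1` lies in a strictly lower row than `i`. -/
def descList (f : Filling) : List ℕ :=
  (List.range' 1 (nBoxes f - 1)).filter (fun i => decide (rowOf f i < rowOf f (i + 1)))

/-- The composition of `n` associated to a set of split positions `d_1 < … < d_k`:
`(d_1, d_2 - d_1, …, n - d_k)`. -/
def compOf (ds : List ℕ) (n : ℕ) : List ℕ :=
  List.zipWith (fun a b => b - a) (0 :: ds) (ds ++ [n])

/-- Split a word into a sentence according to a composition. -/
def splitByComp : List A → List ℕ → List (List A)
  | _, [] => []
  | w, a :: rest => w.take a :: splitByComp (w.drop a) rest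

/-- The color of the box containing the value `v` in a standard filling of shape `I`. -/
def colorOf [Inhabited A] (I : Sentence A) (f : Filling) (v : ℕ) : A :=
  (I.getD (rowOf f v) []).getD ((f.getD (rowOf f v) []).findIdx (fun x => x == v)) default

/-- The maximal word of the colored descent composition of a standard filling of shape `I`:
the colors of its boxes read in the order of their integer entries. -/
def readWord [Inhabited A] (I : Sentence A) (f : Filling) : List A :=
  (List.range (nBoxes f)).map (fun i => colorOf I f (i + 1))

/-- The colored descent composition `co_A(U)` of a standard colored immaculate tableau:
read the colors of the boxes in the order of their entries, starting a new word
immediately after each descent. -/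
def coA [Inhabited A] (I : Sentence A) (f : Filling) : Sentence A :=
  if nBoxes f = 0 then [] else splitByComp (readWord I f) (compOf (descList f) (nBoxes f))

/-- `L_{J,C}`: the number of standard colored immaculate tableaux of shape `J`
with colored descent composition `C`. -/
noncomputable def LJC [Inhabited A] (J C : Sentence A) : ℕ :=
  Set.ncard {f : Filling | IsCIT J f ∧ IsStandardF f ∧ coA J f = C}

/-! ### The colored quasisymmetric functions `QSym_A` -/

/-- A (normal form of a) monomial in the partially commutative variables `x_{a,i}`:
a pair consisting of the list of words `(w_1, …, w_m)` and the list of (strictly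
increasing, positive) second indices `(j_1 < … < j_m)`, representing
`x_{w_1,j_1} ⋯ x_{w_m,j_m}`. -/
abbrev Mono (A : Type*) := List (List A) × List ℕ

/-- A colored quasisymmetric "series": a formal linear combination of monomials,
recorded by its coefficient function.  `QSym_A` itself is the span of the colored
monomial functions `MQ I` inside this space. -/
abbrev QSymA (A : Type*) := Mono A → ℚ

/-- Validity of a monomial normal form: words and indices match up, the indices are
strictly increasing positive integers, and all words are nonempty. -/
def ValidMono (m : Mono A) : Prop :=
  m.1.length = m.2.length ∧ m.2.Chain' (· < ·) ∧ (∀ j ∈ m.2, 1 ≤ j) ∧ ∀ w ∈ m.1, w ≠ []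

open Classical in
/-- The colored monomial quasisymmetric function `M_I`: the sum of all monomials
`x_{w_1,j_1} ⋯ x_{w_m,j_m}` with `j_1 < … < j_m`, where `I = (w_1, …, w_m)`. -/
noncomputable def MQ (I : Sentence A) : QSymA A := fun m =>
  if m.1 = I ∧ ValidMono m then 1 else 0

/-- The largest entry of a filling. -/
def maxEntry (f : Filling) : ℕ := f.flatten.foldr max 0

/-- The monomial `x_T` of a colored immaculate tableau `T = f` of shape `I`:
for `T` of type `B = (u_1, …, u_j)` it is `x_{u_1,1} x_{u_2,2} ⋯ x_{u_j,j}`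
(empty words are skipped). -/
def monoOf (I : Sentence A) (f : Filling) : Mono A :=
  let vs := ((List.range (maxEntry f)).map (· + 1)).filter (fun v => !(typeWord I f v).isEmpty)
  (vs.map (typeWord I f), vs)

/-- The colored dual immaculate function `𝔖*_J = Σ_T x_T`, the sum of the monomials of all
colored immaculate tableaux `T` of shape `J` (its coefficient at a monomial `m` is the
number of such tableaux with `x_T = m`). -/
noncomputable def dualImm (J : Sentence A) : QSymA A := fun m =>
  (Set.ncard {f : Filling | IsCIT J f ∧ monoOf J f = m} : ℚ)

/-- The colored fundamental quasisymmetric function `F_I = Σ_{J ⪯ I} M_J`. -/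
noncomputable def FQ (I : Sentence A) : QSymA A :=
  ∑ᶠ J ∈ {J : Sentence A | Refines J I}, MQ J

/-! ### The colored immaculate descent graph -/

/-- Edges of the colored immaculate descent graph: a directed edge from `I` to `J` (`J ≠ I`)
whenever some standard colored immaculate tableau of shape `I` has colored descent
composition `J`. -/
def IsEdge [Inhabited A] (I J : Sentence A) : Prop := J ≠ I ∧ LJC I J ≠ 0

/-- Directed paths from `I` to `K` in the colored immaculate descent graph, recorded by
their (nonempty) lists of successive vertices; the path `[I]` is the empty path at `I`. -/
def PathsFromTo [Inhabited A] (I K : Sentence A) : Set (List (Sentence A)) :=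
  {p | p.head? = some I ∧ p.getLast? = some K ∧ p.Chain' IsEdge}

/-- The signed weight `(-1)^{ℓ(𝒫)} prod(𝒫)` of a directed path `𝒫`:
`ℓ(𝒫)` is its number of edges and `prod(𝒫)` the product of its edge weights `L_{I,J}`. -/
noncomputable def pathWeight [Inhabited A] (p : List (Sentence A)) : ℚ :=
  ((-1 : ℚ)) ^ (p.length - 1) * ((p.zip p.tail).map (fun e => (LJC e.1 e.2 : ℚ))).prod

/-- `L⁻¹_{I,K} = Σ_𝒫 (-1)^{ℓ(𝒫)} prod(𝒫)`, summed over all directed paths `𝒫`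
from `I` to `K` in the colored immaculate descent graph. -/
noncomputable def Linv [Inhabited A] (I K : Sentence A) : ℚ :=
  ∑ᶠ p ∈ PathsFromTo I K, pathWeight p

/-! ### The colored noncommutative symmetric functions `NSym_A` -/

/-- A formal series over the complete homogeneous basis `{H_I}` of `NSym_A`, recorded by its
coefficient function on (weak) sentences.  `NSym_A` itself consists of the finitely
supported elements supported on genuine sentences; see `InNSym`. -/
abbrev NSymA (A : Type*) := Sentence A → ℚ

/-- Membership in `NSym_A` proper: finitely supported, and supported on genuine sentences. -/
def InNSym (f : NSymA A) : Prop :=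
  (Function.support f).Finite ∧ ∀ I, f I ≠ 0 → IsSentence I

open Classical in
/-- The colored complete homogeneous noncommutative symmetric function
`H_I = H_{w_1} ⋯ H_{w_k}`. -/
noncomputable def Hd (I : Sentence A) : NSymA A := fun J => if J = I then 1 else 0

/-- `H_w` for a single word `w`, with `H_∅ = 1`. -/
noncomputable def Hw (w : List A) : NSymA A := if w.isEmpty then Hd [] else Hd [w]

/-- Multiplication in `NSym_A` (the concatenation product, extended to series):
`H_I · H_J = H_{I ⬝ J}`. -/
def mulN (f g : NSymA A) : NSymA A := fun I =>
  ∑ j ∈ Finset.range (I.length + 1), f (I.take j) * g (I.drop j)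

/-- The duality pairing `⟨·,·⟩ : NSym_A × QSym_A → ℚ`, determined by
`⟨H_I, M_J⟩ = δ_{I,J}`: the `M_I`-coefficient of a quasisymmetric function is its
coefficient on the monomial `x_{w_1,1} x_{w_2,2} ⋯ x_{w_k,k}`. -/
noncomputable def pairNQ (G : NSymA A) (F : QSymA A) : ℚ :=
  ∑ᶠ I ∈ {I : Sentence A | IsSentence I}, G I * F (I, List.range' 1 I.length)

/-- All ways of splitting each word of a list of words into a prefix and a suffix. -/
def splitsOf : List (List A) → List (List (List A) × List (List A))
  | [] => [([], [])]
  | w :: ws =>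
      (((splitsOf ws).map (fun p =>
        (List.range (w.length + 1)).map (fun t => (w.take t :: p.1, w.drop t :: p.2))))).flatten

/-- Restriction of a candidate monomial: keep only the nonempty words together with
their indices. -/
def restrictMono (ws : List (List A)) (js : List ℕ) : Mono A :=
  let ps := (ws.zip js).filter (fun p => !p.1.isEmpty)
  (ps.map Prod.fst, ps.map Prod.snd)

/-- The product of colored quasisymmetric series: the coefficient of a monomial in `F·G`
is the sum, over all ways of writing each of its words as a concatenation of a word of a
monomial of `F` (on the left) and a word of a monomial of `G` (on the right), of the
products of the corresponding coefficients. -/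
def mulQ (F G : QSymA A) : QSymA A := fun m =>
  ((splitsOf m.1).map (fun p => F (restrictMono p.1 m.2) * G (restrictMono p.2 m.2))).sum

/-- The right perp operator `M^⊸` of `M ∈ QSym_A`, the linear operator on `NSym_A`
determined by `⟨M^⊸(H), G⟩ = ⟨H, G·M⟩`; explicitly, for the dual bases `{M_I}` and `{H_I}`,
`M^⊸(H) = Σ_I ⟨H, M_I · M⟩ H_I`. -/
noncomputable def rperp (M : QSymA A) (H : NSymA A) : NSymA A :=
  ∑ᶠ I ∈ {I : Sentence A | IsSentence I}, pairNQ H (mulQ (MQ I) M) • Hd I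

/-- The colored noncommutative Bernstein operator
`𝔹_v = Σ_u Σ_{Q : w(Q^r) = u} (-1)^{ℓ(Q)} H_{v·u} · (Σ_{S ⪰ Q} M_S^⊸)`,
where `Q` runs over all sentences, `u = w(Q^r)` is the concatenation of the words of `Q`
in reverse order, and `S` runs over all coarsenings of `Q`. -/
noncomputable def Bern (v : List A) (f : NSymA A) : NSymA A :=
  ∑ᶠ Q ∈ {Q : Sentence A | IsSentence Q},
    ((-1 : ℚ)) ^ Q.length •
      mulN (Hw (v ++ Q.reverse.flatten))
        (∑ᶠ S ∈ {S : Sentence A | Refines Q S}, rperp (MQ S) f)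

/-- The colored immaculate function `𝔖_J = 𝔹_{v_1} 𝔹_{v_2} ⋯ 𝔹_{v_h}(1)`. -/
noncomputable def ImmS (J : Sentence A) : NSymA A := J.foldr Bern (Hd [])

/-- The colored ribbon function `R_I = Σ_{J ⪰ I} (-1)^{ℓ(J) - ℓ(I)} H_J`. -/
noncomputable def Rib (I : Sentence A) : NSymA A :=
  ∑ᶠ J ∈ {J : Sentence A | Refines I J}, ((-1 : ℚ)) ^ (I.length - J.length) • Hd J

/-- The Pieri relation `J ⊂_w K` for a sentence `J = (v_1, …, v_h)` and a word `w`: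
`K = (u_1, …, u_g)` with `h ≤ g ≤ h+1` (setting `v_{h+1} = ∅`) and `u_j = v_j · q_j`
for words `q_j` (possibly empty) whose reversed concatenation `q_g ⋯ q_1` equals `w`. -/
def PieriRel (J : Sentence A) (w : List A) (K : Sentence A) : Prop :=
  J.length ≤ K.length ∧ K.length ≤ J.length + 1 ∧
  ∃ q : List (List A), q.length = K.length ∧ q.reverse.flatten = w ∧
    ∀ j < K.length, K.getD j [] = J.getD j [] ++ q.getD j []

/-- Right containment of a weak sentence `K` in `J`: same length, and each word of `K` is a
suffix of the corresponding word of `J`. -/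
def RightContained (K J : Sentence A) : Prop :=
  K.length = J.length ∧ ∀ i < J.length, (K.getD i []).IsSuffix (J.getD i [])

/-- The weak sentence `J/_R K`: remove each word of `K` from the right end of the
corresponding word of `J`. -/
def rightQuot (J K : Sentence A) : Sentence A :=
  List.zipWith (fun v u => v.take (v.length - u.length)) J K

/-- Left containment `J ⊆_L I`: `ℓ(J) ≤ ℓ(I)` and each word of `J` is a prefix of the
corresponding word of `I`. -/
def LeftContained (J I : Sentence A) : Prop :=
  J.length ≤ I.length ∧ ∀ i < J.length, (J.getD i []).IsPrefix (I.getD i [])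

/-- A skew colored immaculate tableau of shape `I/J`: a filling of the active boxes
(the `i`-th row keeps the last `|w_i| - |v_i|` boxes) with positive integers, rows weakly
increasing left to right, and the entries in the (active part of the) first column of `I`
strictly increasing top to bottom. -/
def IsSkewCIT (I J : Sentence A) (f : Filling) : Prop :=
  f.map List.length =
    (List.range I.length).map (fun i => (I.getD i []).length - (J.getD i []).length) ∧
  (∀ row ∈ f, row.Chain' (· ≤ ·)) ∧
  ((List.range I.length).filterMap
    (fun i => if (J.getD i []).length = 0 then (f.getD i []).head? else none)).Chain' (· < ·) ∧
  (∀ x ∈ f.flatten, 1 ≤ x)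

/-- The word of the type of a skew tableau at value `v`: the colors of the active boxes with
entry `v`, read left to right, bottom to top. -/
def skewTypeWord (I J : Sentence A) (f : Filling) (v : ℕ) : List A :=
  (((List.range I.length).reverse).map (fun i =>
    rowWith ((I.getD i []).drop (J.getD i []).length) (f.getD i []) v)).flatten

/-- `SkewHasType I J f K` : the skew tableau `f` of shape `I/J` has type `K`. -/
def SkewHasType (I J : Sentence A) (f : Filling) (K : Sentence A) : Prop :=
  ∀ v, 1 ≤ v → skewTypeWord I J f v = K.getD (v - 1) []

/-! ### The complement involution `ψ` and the row-strict functions -/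

/-- The complement `I^c` of a sentence: the unique sentence with the same maximal word
that splits exactly where `I` does not. -/
def complSent (I : Sentence A) : Sentence A :=
  let w := I.flatten
  let n := w.length
  if n = 0 then []
  else
    let splits := (((wl I).scanl (· + ·) 0).drop 1).dropLast
    let csplits := (List.range' 1 (n - 1)).filter (fun i => !(splits.contains i))
    splitByComp w (compOf csplits n)

/-- The `M_I`-coefficient of a colored quasisymmetric function. -/
noncomputable def coeffM (G : QSymA A) (I : Sentence A) : ℚ := G (I, List.range' 1 I.length)

/-- The image of `M_I` under `ψ`, via `M_I = Σ_{J ⪯ I} (-1)^{ℓ(J)-ℓ(I)} F_J` and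
`ψ(F_J) = F_{J^c}`. -/
noncomputable def psiM (I : Sentence A) : QSymA A :=
  ∑ᶠ J ∈ {J : Sentence A | Refines J I}, ((-1 : ℚ)) ^ (J.length - I.length) • FQ (complSent J)

/-- The linear involution `ψ` of `QSym_A`, determined by `ψ(F_I) = F_{I^c}`. -/
noncomputable def psiQ (G : QSymA A) : QSymA A :=
  ∑ᶠ I ∈ {I : Sentence A | IsSentence I}, coeffM G I • psiM I

/-- A colored row-strict immaculate tableau of shape `I`: entries strictly increase left to
right along each row and weakly increase top to bottom down the first column. -/
def IsCRSIT (I : Sentence A) (f : Filling) : Prop :=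
  f.map List.length = I.map List.length ∧
  (∀ row ∈ f, row.Chain' (· < ·)) ∧
  (f.filterMap List.head?).Chain' (· ≤ ·) ∧
  (∀ x ∈ f.flatten, 1 ≤ x)

/-- The word of the type of a row-strict tableau at value `v`: the colors of the boxes with
entry `v`, read left to right, top to bottom. -/
def rsTypeWord (I : Sentence A) (f : Filling) (v : ℕ) : List A :=
  ((I.zip f).map (fun p => rowWith p.1 p.2 v)).flatten

/-- The monomial `x_T` of a colored row-strict immaculate tableau. -/
def rsMonoOf (I : Sentence A) (f : Filling) : Mono A :=
  let vs := ((List.range (maxEntry f)).map (· + 1)).filter (fun v => !(rsTypeWord I f v).isEmpty)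
  (vs.map (rsTypeWord I f), vs)

/-- The colored row-strict dual immaculate function `ℛ𝔖*_J = Σ_T x_T`, summed over all
colored row-strict immaculate tableaux `T` of shape `J`. -/
noncomputable def rsDualImm (J : Sentence A) : QSymA A := fun m =>
  (Set.ncard {f : Filling | IsCRSIT J f ∧ rsMonoOf J f = m} : ℚ)

/-- `α ⪰ β` in the reverse lexicographic order on compositions: at the first index where
they differ, `α` has the *smaller* entry (padding with zeros). -/
def RevLexGE (α β : List ℕ) : Prop :=
  α = β ∨ ∃ i, (∀ j < i, α.getD j 0 = β.getD j 0) ∧ α.getD i 0 < β.getD i 0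

/-! ### Uncolored (ordinary) versions, for `QSym` -/

namespace Uncolored

/-- A composition: a list of positive integers. -/
def IsComposition (α : List ℕ) : Prop := ∀ a ∈ α, 1 ≤ a

/-- `β ⪯ α`: the composition `α` is obtained by summing adjacent parts of `β`. -/
def RefinesC (β α : List ℕ) : Prop :=
  ∃ P : List (List ℕ), (∀ p ∈ P, p ≠ []) ∧ P.flatten = β ∧ P.map List.sum = α

/-- A monomial `x_{i_1}^{a_1} ⋯ x_{i_m}^{a_m}` recorded by its exponents and its
strictly increasing positive indices. -/
abbrev MonoU := List ℕ × List ℕ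

/-- A quasisymmetric "series", recorded by its coefficient function on monomials.
`QSym` is the span of the monomial functions `MU α` inside this space. -/
abbrev QSymU := MonoU → ℚ

/-- Validity of a monomial: matching lengths, strictly increasing positive indices,
positive exponents. -/
def ValidMonoU (m : MonoU) : Prop :=
  m.1.length = m.2.length ∧ m.2.Chain' (· < ·) ∧ (∀ j ∈ m.2, 1 ≤ j) ∧ ∀ a ∈ m.1, 1 ≤ a

open Classical in
/-- The monomial quasisymmetric function `M_α`. -/
noncomputable def MU (α : List ℕ) : QSymU := fun m =>
  if m.1 = α ∧ ValidMonoU m then 1 else 0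

/-- The fundamental quasisymmetric function `F_α = Σ_{β ⪯ α} M_β`. -/
noncomputable def FU (α : List ℕ) : QSymU :=
  ∑ᶠ β ∈ {β : List ℕ | RefinesC β α}, MU β

/-- An immaculate tableau of shape `α`: positive integer entries, rows weakly increasing
left to right, first column strictly increasing top to bottom. -/
def IsIT (α : List ℕ) (f : Filling) : Prop :=
  f.map List.length = α ∧
  (∀ row ∈ f, row.Chain' (· ≤ ·)) ∧
  (f.filterMap List.head?).Chain' (· < ·) ∧
  (∀ x ∈ f.flatten, 1 ≤ x)

/-- The number of boxes of `f` with entry `v`. -/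
def countOf (f : Filling) (v : ℕ) : ℕ := (f.flatten.filter (fun x => x == v)).length

/-- The monomial `x^T` of an immaculate tableau `T` of type `β`:
`x_1^{β_1} ⋯ x_h^{β_h}` (zero exponents skipped). -/
def monoOfU (f : Filling) : MonoU :=
  let vs := ((List.range (maxEntry f)).map (· + 1)).filter (fun v => decide (countOf f v ≠ 0))
  (vs.map (countOf f), vs)

/-- The dual immaculate function `𝔖*_α = Σ_T x^T`, summed over all immaculate tableaux
of shape `α`. -/
noncomputable def dualImmU (α : List ℕ) : QSymU := fun m =>
  (Set.ncard {f : Filling | IsIT α f ∧ monoOfU f = m} : ℚ)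

/-- The descent composition `co(U)` of a standard immaculate tableau. -/
def descComp (f : Filling) : List ℕ :=
  if nBoxes f = 0 then [] else compOf (descList f) (nBoxes f)

/-- `L_{α,β}`: the number of standard immaculate tableaux of shape `α` with descent
composition `β`. -/
noncomputable def LU (α β : List ℕ) : ℕ :=
  Set.ncard {f : Filling | IsIT α f ∧ IsStandardF f ∧ descComp f = β}

/-- Edges of the immaculate descent graph `𝔇^n`. -/
def IsEdgeU (α β : List ℕ) : Prop := β ≠ α ∧ LU α β ≠ 0

/-- Directed paths from `α` to `β` in the immaculate descent graph, recorded by their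
lists of successive vertices; `[α]` is the empty path at `α`. -/
def PathsU (α β : List ℕ) : Set (List (List ℕ)) :=
  {p | p.head? = some α ∧ p.getLast? = some β ∧ p.Chain' IsEdgeU}

/-- The signed weight `(-1)^{ℓ(𝒫)} prod(𝒫)` of a path. -/
noncomputable def pathWeightU (p : List (List ℕ)) : ℚ :=
  ((-1 : ℚ)) ^ (p.length - 1) * ((p.zip p.tail).map (fun e => (LU e.1 e.2 : ℚ))).prod

/-- `L⁻¹_{α,β} = Σ_𝒫 (-1)^{ℓ(𝒫)} prod(𝒫)`, over directed paths from `α` to `β` in `𝔇^n`. -/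
noncomputable def LinvU (α β : List ℕ) : ℚ :=
  ∑ᶠ p ∈ PathsU α β, pathWeightU p

end Uncolored

end ColoredImm

namespace ColoredImm

/-!
Standardization `T ↦ stdFill T` renumbers the boxes of a tableau in type-reading order. It preserves
this order, and every condition defining a colored immaculate tableau can be expressed through the
order alone, so `stdFill T` is a standard colored immaculate tableau `U` of the same shape.

Conversely, write the entries of a filling `T` along the reading order of a standard `U`. Then
`stdFill T = U` exactly when this sequence increases weakly, and strictly at each descent of `U`. If
`T` has monomial `m = x_{w_1,j_1} ⋯ x_{w_k,j_k}`, the sequence is `j_1` repeated `|w_1|` times, then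
`j_2` repeated `|w_2|` times, and so on. So it increases strictly exactly where one word `w_i` ends
and the next begins, and the condition says that each descent of `U` is the end of some `w_i`, that
is, `(w_1, …, w_k) ⪯ co_A(U)`. Hence the tableaux with standardization `U` contribute exactly the
monomials of `F_{co_A(U)}`, each once.
-/

section Boxes

theorem map_getD_range {α : Type*} (l : List α) (d : α) :
    (List.range l.length).map (l.getD · d) = l :=
  List.ext_getElem (by simp) fun i _ hi => by simp [hi]

theorem mem_boxes {f : Filling} {b : ℕ × ℕ} :
    b ∈ boxes f ↔ b.1 < f.length ∧ b.2 < (f.getD b.1 []).length := by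
  obtain ⟨r, c⟩ := b
  simp only [boxes, List.mem_flatten, List.mem_map, List.mem_range]
  constructor
  · rintro ⟨_, ⟨r', hr', rfl⟩, hb⟩
    obtain ⟨c', hc', hrc⟩ := List.mem_map.1 hb
    obtain ⟨rfl, rfl⟩ := Prod.mk.inj hrc
    exact ⟨hr', List.mem_range.1 hc'⟩
  · rintro ⟨hr, hc⟩
    exact ⟨_, ⟨r, hr, rfl⟩, List.mem_map.2 ⟨c, List.mem_range.2 hc, rfl⟩⟩

theorem nodup_boxes (f : Filling) : (boxes f).Nodup := by
  rw [boxes, ← List.flatMap_def, List.nodup_flatMap]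
  refine ⟨fun r _ => List.nodup_range.map fun c c' h => congrArg Prod.snd h, ?_⟩
  refine List.nodup_range.imp fun {r r'} hne b hb hb' => hne ?_
  obtain ⟨_, _, rfl⟩ := List.mem_map.1 hb
  obtain ⟨_, _, h⟩ := List.mem_map.1 hb'
  exact (congrArg Prod.fst h).symm

theorem map_entryAt_boxes (f : Filling) : (boxes f).map (entryAt f) = f.flatten := by
  rw [boxes, List.map_flatten, List.map_map]
  conv_rhs => rw [← map_getD_range f []]
  congr 1
  refine List.map_congr_left fun r _ => ?_
  rw [Function.comp_apply, List.map_map]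
  exact map_getD_range (f.getD r []) 0

theorem mem_flatten_iff_exists_box {f : Filling} {x : ℕ} :
    x ∈ f.flatten ↔ ∃ b ∈ boxes f, entryAt f b = x := by
  rw [← map_entryAt_boxes, List.mem_map]

theorem length_boxes (f : Filling) : (boxes f).length = nBoxes f := by
  rw [nBoxes, ← map_entryAt_boxes, List.length_map]

theorem length_getD {α : Type*} (f : List (List α)) (r : ℕ) :
    (f.getD r []).length = (f.map List.length).getD r 0 := by
  cases h : f[r]? <;> simp [List.getD_eq_getElem?_getD, h]

theorem boxes_eq_of_shape_eq {f g : Filling} (h : f.map List.length = g.map List.length) :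
    boxes f = boxes g := by
  have hlen : f.length = g.length := by simpa using congrArg List.length h
  simp only [boxes, length_getD, h, hlen]

theorem ext_of_entryAt_eq {f g : Filling} (h : f.map List.length = g.map List.length)
    (hfg : ∀ b ∈ boxes f, entryAt f b = entryAt g b) : f = g := by
  refine List.eq_iff_flatten_eq.2 ⟨?_, h⟩
  rw [← map_entryAt_boxes f, ← map_entryAt_boxes g, ← boxes_eq_of_shape_eq h]
  exact List.map_congr_left hfg

theorem entryAt_map {f : Filling} {b : ℕ × ℕ} (g : ℕ → ℕ) (hb : b ∈ boxes f) :
    entryAt (f.map (List.map g)) b = g (entryAt f b) := by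
  obtain ⟨hr, hc⟩ := mem_boxes.1 hb
  rw [List.getD_eq_getElem _ _ hr] at hc
  simp [entryAt, hr, hc]

theorem stdFill_shape (f : Filling) : (stdFill f).map List.length = f.map List.length := by
  simp only [stdFill, List.map_map, Function.comp_def, List.length_map, List.length_range,
    length_getD]
  simpa using map_getD_range (f.map List.length) 0

theorem boxes_stdFill (f : Filling) : boxes (stdFill f) = boxes f :=
  boxes_eq_of_shape_eq (stdFill_shape f)

theorem entryAt_stdFill {f : Filling} {b : ℕ × ℕ} (hb : b ∈ boxes f) :
    entryAt (stdFill f) b = 1 + ((boxes f).filter (beforeB f · b)).length := by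
  obtain ⟨hr, hc⟩ := mem_boxes.1 hb
  rw [List.getD_eq_getElem _ _ hr] at hc
  simp [entryAt, stdFill, hr, hc]

end Boxes

section Tableaux

variable {A : Type*}

theorem forall_row_isChain_iff {f : Filling} :
    (∀ row ∈ f, row.IsChain (· ≤ ·)) ↔
      ∀ r c c', (r, c') ∈ boxes f → c < c' → entryAt f (r, c) ≤ entryAt f (r, c') := by
  simp only [List.isChain_iff_pairwise, List.pairwise_iff_getElem, mem_boxes, entryAt,
    List.forall_mem_iff_forall_getElem]
  constructor
  · rintro h r c c' ⟨hr, hc'⟩ hlt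
    simp only [List.getD_eq_getElem _ _ hr] at hc' ⊢
    rw [List.getD_eq_getElem _ _ hc', List.getD_eq_getElem _ _ (hlt.trans hc')]
    exact h r hr c c' (hlt.trans hc') hc' hlt
  · intro h r hr c c' hc hc' hlt
    have := h r c c' ⟨hr, by simpa [hr] using hc'⟩ hlt
    simpa [hr, hc, hc'] using this

theorem firstColumn_isChain_iff {f : Filling} :
    (f.filterMap List.head?).IsChain (· < ·) ↔
      ∀ r r', (r, 0) ∈ boxes f → (r', 0) ∈ boxes f → r < r' →
        entryAt f (r, 0) < entryAt f (r', 0) := by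
  rw [List.isChain_iff_pairwise, List.pairwise_filterMap, List.pairwise_iff_getElem]
  simp only [mem_boxes, entryAt, List.head?_eq_getElem?]
  constructor
  · rintro h r r' ⟨hr, hc⟩ ⟨hr', hc'⟩ hlt
    simp only [List.getD_eq_getElem _ _ hr, List.getD_eq_getElem _ _ hr'] at hc hc' ⊢
    rw [List.getD_eq_getElem _ _ hc, List.getD_eq_getElem _ _ hc']
    exact h r r' hr hr' hlt _ (List.getElem?_eq_getElem hc) _ (List.getElem?_eq_getElem hc')
  · intro h r r' hr hr' hlt x hx y hy
    obtain ⟨hc, rfl⟩ := List.getElem?_eq_some_iff.1 hx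
    obtain ⟨hc', rfl⟩ := List.getElem?_eq_some_iff.1 hy
    have := h r r' ⟨hr, by simpa [hr] using hc⟩ ⟨hr', by simpa [hr'] using hc'⟩ hlt
    simpa [hr, hr', hc, hc'] using this

theorem isCIT_iff {J : Sentence A} {f : Filling} :
    IsCIT J f ↔ f.map List.length = J.map List.length ∧
      (∀ r c c', (r, c') ∈ boxes f → c < c' → entryAt f (r, c) ≤ entryAt f (r, c')) ∧
      (∀ r r', (r, 0) ∈ boxes f → (r', 0) ∈ boxes f → r < r' →
        entryAt f (r, 0) < entryAt f (r', 0)) ∧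
      ∀ b ∈ boxes f, 1 ≤ entryAt f b := by
  rw [← forall_row_isChain_iff, ← firstColumn_isChain_iff,
    ← List.forall_mem_map (P := (1 ≤ ·)), map_entryAt_boxes]
  rfl

theorem IsCIT.one_le_entryAt {J : Sentence A} {f : Filling} (hf : IsCIT J f) :
    ∀ b ∈ boxes f, 1 ≤ entryAt f b :=
  (isCIT_iff.1 hf).2.2.2

end Tableaux

section ReadingOrder

variable {f g : Filling} {b b' b'' : ℕ × ℕ}

theorem beforeB_iff : beforeB f b b' ↔ entryAt f b < entryAt f b' ∨
    entryAt f b = entryAt f b' ∧ (b'.1 < b.1 ∨ b.1 = b'.1 ∧ b.2 < b'.2) := by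
  simp [beforeB]

theorem beforeB_trans (h : beforeB f b b') (h' : beforeB f b' b'') : beforeB f b b'' := by
  rw [beforeB_iff] at *
  omega

theorem beforeB_asymm (h : beforeB f b b') : ¬ beforeB f b' b := by
  rw [beforeB_iff] at *
  omega

theorem beforeB_or_eq_or_beforeB (f : Filling) (b b' : ℕ × ℕ) :
    beforeB f b b' ∨ b = b' ∨ beforeB f b' b := by
  simp only [beforeB_iff, Prod.ext_iff]
  omega

theorem entryAt_le_of_beforeB (h : beforeB f b b') : entryAt f b ≤ entryAt f b' := by
  rw [beforeB_iff] at h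
  omega

/-- The boxes of a filling listed in type-reading order: by increasing entry, boxes with equal
entries being read from the bottom row up and from left to right. -/
def readingList (f : Filling) : List (ℕ × ℕ) :=
  (boxes f).mergeSort fun b b' => !beforeB f b' b

theorem readingList_perm_boxes (f : Filling) : (readingList f).Perm (boxes f) :=
  List.mergeSort_perm _ _

theorem mem_readingList : b ∈ readingList f ↔ b ∈ boxes f :=
  (readingList_perm_boxes f).mem_iff

theorem length_readingList (f : Filling) : (readingList f).length = nBoxes f :=
  (readingList_perm_boxes f).length_eq.trans (length_boxes f)

theorem pairwise_beforeB_readingList (f : Filling) :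
    (readingList f).Pairwise (beforeB f · ·) := by
  have hsorted : (readingList f).Pairwise fun b b' => !beforeB f b' b := by
    refine List.pairwise_mergeSort (fun a b c hab hbc => ?_) (fun a b => ?_) _
    · rcases beforeB_or_eq_or_beforeB f a b with h | rfl | h
      · rcases beforeB_or_eq_or_beforeB f b c with h' | rfl | h'
        · simpa using beforeB_asymm (beforeB_trans h h')
        · exact hab
        · simp [h'] at hbc
      · exact hbc
      · simp [h] at hab
    · by_cases h : beforeB f b a
      · simpa [h] using beforeB_asymm h
      · simp [h]
  have hnodup : (readingList f).Nodup := (readingList_perm_boxes f).nodup_iff.2 (nodup_boxes f)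
  refine (hsorted.and hnodup).imp fun {b b'} ⟨hle, hne⟩ => ?_
  rcases beforeB_or_eq_or_beforeB f b b' with h | h | h
  · exact h
  · exact absurd h hne
  · simp [h] at hle

theorem readingList_eq_of_pairwise {l : List (ℕ × ℕ)} (hperm : l.Perm (boxes f))
    (hl : l.Pairwise (beforeB f · ·)) : readingList f = l :=
  ((readingList_perm_boxes f).trans hperm.symm).eq_of_pairwise
    (fun _ _ _ _ h h' => absurd h' (beforeB_asymm h)) (pairwise_beforeB_readingList f) hl

theorem beforeB_getElem_readingList_iff {i j : ℕ} (hi : i < (readingList f).length)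
    (hj : j < (readingList f).length) :
    beforeB f (readingList f)[i] (readingList f)[j] ↔ i < j := by
  have hlt := List.pairwise_iff_getElem.1 (pairwise_beforeB_readingList f)
  refine ⟨fun h => ?_, hlt i j hi hj⟩
  rcases lt_trichotomy i j with hij | rfl | hij
  · exact hij
  · exact absurd h (beforeB_asymm h)
  · exact absurd h (beforeB_asymm (hlt j i hj hi hij))

theorem pairwise_entryAt_readingList (f : Filling) :
    ((readingList f).map (entryAt f)).Pairwise (· ≤ ·) :=
  List.pairwise_map.2 ((pairwise_beforeB_readingList f).imp entryAt_le_of_beforeB)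

theorem map_entryAt_readingList_perm (hshape : f.map List.length = g.map List.length) :
    ((readingList f).map (entryAt g)).Perm g.flatten := by
  rw [← map_entryAt_boxes g, ← boxes_eq_of_shape_eq hshape]
  exact (readingList_perm_boxes f).map _

theorem ext_of_map_entryAt_readingList {l : Filling}
    (hf : l.map List.length = f.map List.length) (hg : l.map List.length = g.map List.length)
    (h : (readingList l).map (entryAt f) = (readingList l).map (entryAt g)) : f = g :=
  ext_of_entryAt_eq (hf.symm.trans hg) fun _ hb => List.map_inj_left.1 h _ <|
    mem_readingList.2 (boxes_eq_of_shape_eq hf ▸ hb)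

end ReadingOrder

section Standardization

variable {A : Type*} {f U : Filling} {b b' : ℕ × ℕ}

theorem nBoxes_eq_of_shape_eq (h : f.map List.length = U.map List.length) :
    nBoxes f = nBoxes U := by
  rw [← length_boxes, ← length_boxes, boxes_eq_of_shape_eq h]

theorem length_filter_getElem_of_pairwise {α : Type*} {r : α → α → Bool}
    (hr : ∀ a b, r a b → ¬ r b a) {l : List α} (hl : l.Pairwise (r · ·)) {i : ℕ}
    (hi : i < l.length) : (l.filter (r · l[i])).length = i := by
  have htake : (l.take i).filter (r · l[i]) = l.take i := by
    refine List.filter_eq_self.2 fun a ha => ?_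
    obtain ⟨j, hj, rfl⟩ := List.mem_take_iff_getElem.1 ha
    exact List.pairwise_iff_getElem.1 hl j i _ hi (by omega)
  have hdrop : (l.drop i).filter (r · l[i]) = [] := by
    have hself : ¬ r l[i] l[i] := fun h => hr _ _ h h
    rw [List.drop_eq_getElem_cons hi, List.filter_cons_of_neg (by exact hself),
      List.filter_eq_nil_iff]
    intro a ha
    obtain ⟨j, hj, rfl⟩ := List.mem_drop_iff_getElem.1 ha
    exact hr _ _ (List.pairwise_iff_getElem.1 hl i (i + 1 + j) hi (by omega) (by omega))
  have hfilter : l.filter (r · l[i]) = l.take i := by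
    simpa only [List.filter_append, htake, hdrop, List.append_nil] using
      congrArg (List.filter (r · l[i])) (List.take_append_drop i l).symm
  rw [hfilter, List.length_take_of_le hi.le]

theorem entryAt_stdFill_getElem_readingList {i : ℕ} (hi : i < (readingList f).length) :
    entryAt (stdFill f) (readingList f)[i] = 1 + i := by
  rw [entryAt_stdFill (mem_readingList.1 (List.getElem_mem hi)),
    ← ((readingList_perm_boxes f).filter _).length_eq,
    length_filter_getElem_of_pairwise (fun _ _ => beforeB_asymm)
      (pairwise_beforeB_readingList f) hi]

theorem map_entryAt_stdFill_readingList (f : Filling) :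
    (readingList f).map (entryAt (stdFill f)) = List.range' 1 (nBoxes f) :=
  List.ext_getElem (by simp [length_readingList]) fun i _ _ => by
    simp only [List.getElem_map, List.getElem_range', one_mul]
    exact entryAt_stdFill_getElem_readingList _

theorem isStandardF_stdFill (f : Filling) : IsStandardF (stdFill f) := by
  rw [IsStandardF, nBoxes_eq_of_shape_eq (stdFill_shape f), ← map_entryAt_stdFill_readingList]
  exact (map_entryAt_readingList_perm (stdFill_shape f).symm).symm

theorem readingList_stdFill (f : Filling) : readingList (stdFill f) = readingList f := by
  refine readingList_eq_of_pairwise (boxes_stdFill f ▸ readingList_perm_boxes f) ?_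
  have hsorted : ((readingList f).map (entryAt (stdFill f))).Pairwise (· < ·) :=
    map_entryAt_stdFill_readingList f ▸ List.pairwise_lt_range'
  exact (List.pairwise_map.1 hsorted).imp fun h => beforeB_iff.2 (Or.inl h)

theorem beforeB_stdFill_iff (hb : b ∈ boxes f) (hb' : b' ∈ boxes f) :
    beforeB (stdFill f) b b' ↔ beforeB f b b' := by
  obtain ⟨i, hi, rfl⟩ := List.getElem_of_mem (mem_readingList.2 hb)
  obtain ⟨j, hj, rfl⟩ := List.getElem_of_mem (mem_readingList.2 hb')
  rw [beforeB_getElem_readingList_iff]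
  simpa only [readingList_stdFill] using
    beforeB_getElem_readingList_iff (f := stdFill f) (readingList_stdFill f ▸ hi)
      (readingList_stdFill f ▸ hj)

theorem IsStandardF.map_entryAt_readingList (hU : IsStandardF U) :
    (readingList U).map (entryAt U) = List.range' 1 (nBoxes U) :=
  ((map_entryAt_readingList_perm rfl).trans hU).eq_of_pairwise
    (fun _ _ _ _ => le_antisymm) (pairwise_entryAt_readingList U) List.pairwise_le_range'

theorem IsStandardF.entryAt_getElem_readingList (hU : IsStandardF U) {i : ℕ}
    (hi : i < (readingList U).length) : entryAt U (readingList U)[i] = i + 1 := by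
  have := List.getElem_of_eq hU.map_entryAt_readingList (i := i) (by simpa using hi)
  simpa [add_comm] using this

theorem stdFill_eq_of_readingList_eq (hU : IsStandardF U)
    (hshape : f.map List.length = U.map List.length) (h : readingList f = readingList U) :
    stdFill f = U := by
  refine ext_of_map_entryAt_readingList (stdFill_shape f).symm hshape ?_
  rw [map_entryAt_stdFill_readingList, h, hU.map_entryAt_readingList,
    nBoxes_eq_of_shape_eq hshape]

theorem isCIT_iff_beforeB {J : Sentence A} :
    IsCIT J f ↔ f.map List.length = J.map List.length ∧
      (∀ r c c', (r, c') ∈ boxes f → c < c' → beforeB f (r, c) (r, c')) ∧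
      (∀ r r', (r, 0) ∈ boxes f → (r', 0) ∈ boxes f → r < r' → beforeB f (r, 0) (r', 0)) ∧
      ∀ b ∈ boxes f, 1 ≤ entryAt f b := by
  have hrow : ∀ r c c', c < c' →
      (beforeB f (r, c) (r, c') ↔ entryAt f (r, c) ≤ entryAt f (r, c')) := by
    intro r c c' h
    rw [beforeB_iff]
    grind
  have hcol : ∀ r r', r < r' →
      (beforeB f (r, 0) (r', 0) ↔ entryAt f (r, 0) < entryAt f (r', 0)) := by
    intro r r' h
    rw [beforeB_iff]
    grind
  rw [isCIT_iff]
  grind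

theorem one_le_entryAt_stdFill (hb : b ∈ boxes f) : 1 ≤ entryAt (stdFill f) b :=
  entryAt_stdFill hb ▸ Nat.le_add_right 1 _

theorem isCIT_stdFill_iff {J : Sentence A} (hpos : ∀ b ∈ boxes f, 1 ≤ entryAt f b) :
    IsCIT J (stdFill f) ↔ IsCIT J f := by
  have hleft : ∀ {r c c'}, (r, c') ∈ boxes f → c < c' → (r, c) ∈ boxes f := fun h hlt =>
    mem_boxes.2 ⟨(mem_boxes.1 h).1, hlt.trans (mem_boxes.1 h).2⟩
  rw [isCIT_iff_beforeB, isCIT_iff_beforeB, stdFill_shape, boxes_stdFill]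
  grind [beforeB_stdFill_iff, one_le_entryAt_stdFill]

end Standardization

section Descents

variable {A : Type*} {J : Sentence A} {f U : Filling} {b b' : ℕ × ℕ} {i : ℕ}

/-- The color of box `b` in the colored composition diagram of `J`. -/
def colorAt [Inhabited A] (J : Sentence A) (b : ℕ × ℕ) : A := (J.getD b.1 []).getD b.2 default

theorem IsStandardF.injOn_entryAt (hU : IsStandardF U) :
    Set.InjOn (entryAt U) {b | b ∈ boxes U} := by
  have hnodup : ((boxes U).map (entryAt U)).Nodup :=
    map_entryAt_boxes U ▸ hU.nodup_iff.2 List.nodup_range'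
  exact fun b hb b' hb' h => List.inj_on_of_nodup_map hnodup hb hb' h

theorem mem_getElem_iff_exists_entryAt {r v : ℕ} (hr : r < f.length) :
    v ∈ f[r] ↔ ∃ c, (r, c) ∈ boxes f ∧ entryAt f (r, c) = v := by
  rw [List.mem_iff_getElem]
  simp only [mem_boxes, entryAt, List.getD_eq_getElem _ _ hr, hr, true_and]
  refine exists_congr fun c => ⟨?_, ?_⟩
  · rintro ⟨hc, rfl⟩
    exact ⟨hc, List.getD_eq_getElem _ _ hc⟩
  · rintro ⟨hc, rfl⟩
    exact ⟨hc, (List.getD_eq_getElem _ _ hc).symm⟩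

theorem IsStandardF.rowOf_entryAt (hU : IsStandardF U) (hb : b ∈ boxes U) :
    rowOf U (entryAt U b) = b.1 := by
  have hr := (mem_boxes.1 hb).1
  refine (List.findIdx_eq hr).2 ⟨?_, fun r hrb => ?_⟩
  · simpa using (mem_getElem_iff_exists_entryAt hr).2 ⟨b.2, hb, rfl⟩
  · rw [Bool.eq_false_iff, Ne, List.contains_iff_mem,
      mem_getElem_iff_exists_entryAt (hrb.trans hr)]
    rintro ⟨c, hc, h⟩
    exact hrb.ne (congrArg Prod.fst (hU.injOn_entryAt hc hb h))

theorem IsStandardF.colorOf_entryAt [Inhabited A] (hU : IsStandardF U) (J : Sentence A)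
    (hb : b ∈ boxes U) : colorOf J U (entryAt U b) = colorAt J b := by
  obtain ⟨hr, hc⟩ := mem_boxes.1 hb
  have hrow : ∀ c (hc : c < (U.getD b.1 []).length),
      (U.getD b.1 [])[c] = entryAt U (b.1, c) := fun c hc => (List.getD_eq_getElem _ _ hc).symm
  rw [colorOf, hU.rowOf_entryAt hb, colorAt]
  congr 1
  refine (List.findIdx_eq hc).2 ⟨beq_iff_eq.2 (hrow b.2 hc), fun c hcb => ?_⟩
  rw [hrow, beq_eq_false_iff_ne]
  intro h
  exact hcb.ne (congrArg Prod.snd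
    (hU.injOn_entryAt (mem_boxes.2 ⟨hr, hcb.trans hc⟩ : (b.1, c) ∈ boxes U) hb h))

theorem IsStandardF.rowOf_succ (hU : IsStandardF U) (hi : i < (readingList U).length) :
    rowOf U (i + 1) = (readingList U)[i].1 := by
  rw [← hU.entryAt_getElem_readingList hi,
    hU.rowOf_entryAt (mem_readingList.1 (List.getElem_mem hi))]

theorem IsStandardF.readWord_eq [Inhabited A] (hU : IsStandardF U) (J : Sentence A) :
    readWord J U = (readingList U).map (colorAt J) := by
  refine List.ext_getElem (by simp [readWord, length_readingList]) fun i _ hi => ?_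
  rw [List.length_map] at hi
  simp only [readWord, List.getElem_map, List.getElem_range]
  rw [← hU.entryAt_getElem_readingList hi,
    hU.colorOf_entryAt J (mem_readingList.1 (List.getElem_mem hi))]

theorem exists_eq_succ_of_mem_descList {d : ℕ} (hd : d ∈ descList U) :
    ∃ i, d = i + 1 ∧ i + 1 < nBoxes U := by
  have := List.mem_range'_1.1 (List.mem_of_mem_filter hd)
  exact ⟨d - 1, by omega, by omega⟩

theorem IsStandardF.succ_mem_descList_iff (hU : IsStandardF U)
    (hi : i + 1 < (readingList U).length) :
    i + 1 ∈ descList U ↔ (readingList U)[i].1 < (readingList U)[i + 1].1 := by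
  have hn := length_readingList U
  rw [descList, List.mem_filter, List.mem_range'_1, decide_eq_true_eq,
    hU.rowOf_succ (Nat.lt_of_succ_lt hi), hU.rowOf_succ hi]
  exact and_iff_right (by omega)

theorem entryAt_lt_of_beforeB_of_fst_lt (h : beforeB f b b') (hrow : b.1 < b'.1) :
    entryAt f b < entryAt f b' := by
  rw [beforeB_iff] at h
  omega

theorem IsCIT.snd_lt_of_beforeB (hU : IsCIT J U) (hb : b ∈ boxes U) (h : beforeB U b b')
    (hrow : b.1 = b'.1) : b.2 < b'.2 := by
  obtain ⟨r, c⟩ := b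
  obtain ⟨_, c'⟩ := b'
  obtain rfl : r = _ := hrow
  by_contra! hle
  rcases hle.eq_or_lt with rfl | hlt
  · exact beforeB_asymm h h
  · exact beforeB_asymm h ((isCIT_iff_beforeB.1 hU).2.1 r c' c hb hlt)

theorem readingList_eq_iff (hC : IsCIT J U) (hU : IsStandardF U)
    (hshape : f.map List.length = U.map List.length) :
    readingList f = readingList U ↔ ∀ i (hi : i + 1 < (readingList U).length),
      entryAt f (readingList U)[i] ≤ entryAt f (readingList U)[i + 1] ∧
      (i + 1 ∈ descList U →
        entryAt f (readingList U)[i] < entryAt f (readingList U)[i + 1]) := by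
  constructor
  · intro h i hi
    have hbefore := List.pairwise_iff_getElem.1 (h ▸ pairwise_beforeB_readingList f)
      i (i + 1) (Nat.lt_of_succ_lt hi) hi i.lt_succ_self
    exact ⟨entryAt_le_of_beforeB hbefore, fun hd =>
      entryAt_lt_of_beforeB_of_fst_lt hbefore ((hU.succ_mem_descList_iff hi).1 hd)⟩
  · intro h
    have : Trans (beforeB f · ·) (beforeB f · ·) (beforeB f · ·) := ⟨beforeB_trans⟩
    refine readingList_eq_of_pairwise
      (boxes_eq_of_shape_eq hshape ▸ readingList_perm_boxes U)
      (List.isChain_iff_pairwise.1 (List.isChain_iff_getElem.2 fun i hi => ?_))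
    have hbefore := (beforeB_getElem_readingList_iff (Nat.lt_of_succ_lt hi) hi).2 i.lt_succ_self
    have hmem := mem_readingList.1 (List.getElem_mem (Nat.lt_of_succ_lt hi))
    obtain ⟨hle, hlt⟩ := h i hi
    rw [hU.succ_mem_descList_iff hi] at hlt
    rw [beforeB_iff]
    rcases lt_trichotomy (readingList U)[i].1 (readingList U)[i + 1].1 with hrow | hrow | hrow
    · exact Or.inl (hlt hrow)
    · exact hle.lt_or_eq.imp_right fun he =>
        ⟨he, Or.inr ⟨hrow, hC.snd_lt_of_beforeB hmem hbefore hrow⟩⟩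
    · exact hle.lt_or_eq.imp_right fun he => ⟨he, Or.inl hrow⟩

end Descents

section Breaks

variable {A : Type*} {I J : Sentence A} {d : ℕ}

/-- The positions, in the concatenation of the words of a sentence, at which a word of the sentence
begins or ends (including `0` and the size of the sentence), in increasing order. -/
def breaks : Sentence A → List ℕ
  | [] => [0]
  | w :: I => 0 :: (breaks I).map (w.length + ·)

theorem zero_mem_breaks (I : Sentence A) : 0 ∈ breaks I := by
  cases I <;> simp [breaks]

theorem mem_breaks_iff : d ∈ breaks I ↔ ∃ p s, I = p ++ s ∧ p.flatten.length = d := by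
  induction I generalizing d with
  | nil => simp [breaks, eq_comm]
  | cons w I ih =>
    simp only [breaks, List.mem_cons, List.mem_map, ih]
    constructor
    · rintro (rfl | ⟨_, ⟨p, s, rfl, rfl⟩, rfl⟩)
      · exact ⟨[], w :: I, rfl, rfl⟩
      · exact ⟨w :: p, s, rfl, by simp⟩
    · rintro ⟨p, s, hps, rfl⟩
      rcases List.cons_eq_append_iff.1 hps with ⟨rfl, _⟩ | ⟨p', rfl, rfl⟩
      · exact Or.inl rfl
      · exact Or.inr ⟨_, ⟨p', s, rfl, rfl⟩, by simp⟩

theorem length_flatten_mem_breaks (I : Sentence A) : I.flatten.length ∈ breaks I :=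
  mem_breaks_iff.2 ⟨I, [], by simp, rfl⟩

theorem mem_breaks_of_add_mem_breaks_append {p s : Sentence A}
    (h : p.flatten.length + d ∈ breaks (p ++ s)) : d ∈ breaks s := by
  obtain ⟨q, t, hqt, hlen⟩ := mem_breaks_iff.1 h
  rcases List.append_eq_append_iff.1 hqt with ⟨c, rfl, rfl⟩ | ⟨c, rfl, rfl⟩
  · exact mem_breaks_iff.2 ⟨c, t, rfl, by simpa using hlen⟩
  · obtain rfl : d = 0 := by
      rw [List.flatten_append, List.length_append] at hlen
      omega
    exact zero_mem_breaks s

theorem isSentence_of_pairwise_breaks (h : (breaks I).Pairwise (· < ·)) : IsSentence I := by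
  induction I with
  | nil => simp [IsSentence]
  | cons w I ih =>
    obtain ⟨hpos, htail⟩ := List.pairwise_cons.1 h
    have hw : 0 < w.length := hpos _ (List.mem_map.2 ⟨0, zero_mem_breaks I, rfl⟩)
    refine List.forall_mem_cons.2 ⟨List.ne_nil_of_length_pos hw, ih ?_⟩
    exact (List.pairwise_map.1 htail).imp fun h => Nat.lt_of_add_lt_add_left h

end Breaks

section Refinement

variable {A : Type*} {I J : Sentence A}

theorem Refines.flatten_eq (h : Refines J I) : J.flatten = I.flatten := by
  obtain ⟨P, _, rfl, rfl⟩ := h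
  exact List.flatten_flatten

theorem Refines.breaks_subset (h : Refines J I) : breaks I ⊆ breaks J := by
  obtain ⟨P, _, rfl, rfl⟩ := h
  intro d hd
  obtain ⟨p, s, hps, rfl⟩ := mem_breaks_iff.1 hd
  obtain ⟨Q, R, rfl, rfl, rfl⟩ := List.map_eq_append_iff.1 hps
  exact mem_breaks_iff.2
    ⟨Q.flatten, R.flatten, List.flatten_append, congrArg List.length List.flatten_flatten⟩

theorem Refines.cons {p : Sentence A} (hp : p ≠ []) (h : Refines J I) :
    Refines (p ++ J) (p.flatten :: I) := by
  obtain ⟨P, hP, rfl, rfl⟩ := h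
  exact ⟨p :: P, List.forall_mem_cons.2 ⟨hp, hP⟩, rfl, rfl⟩

theorem refines_iff (hI : IsSentence I) (hJ : IsSentence J) :
    Refines J I ↔ J.flatten = I.flatten ∧ breaks I ⊆ breaks J := by
  refine ⟨fun h => ⟨h.flatten_eq, h.breaks_subset⟩, ?_⟩
  rintro ⟨hflat, hsub⟩
  induction I generalizing J with
  | nil =>
    obtain rfl : J = [] :=
      List.eq_nil_iff_forall_not_mem.2 fun w hw => hJ w hw (List.flatten_eq_nil_iff.1 hflat w hw)
    exact ⟨[], by simp, rfl, rfl⟩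
  | cons w I ih =>
    obtain ⟨hw, hI'⟩ := List.forall_mem_cons.1 hI
    have hmem : w.length ∈ breaks J :=
      hsub (List.mem_cons_of_mem _ (List.mem_map.2 ⟨0, zero_mem_breaks I, rfl⟩))
    obtain ⟨p, s, rfl, hlen⟩ := mem_breaks_iff.1 hmem
    rw [List.flatten_append, List.flatten_cons] at hflat
    obtain ⟨rfl, hs⟩ := List.append_inj hflat hlen
    refine Refines.cons (by rintro rfl; exact hw rfl)
      (ih hI' (fun v hv => hJ v (List.mem_append_right p hv)) hs fun d hd => ?_)
    exact mem_breaks_of_add_mem_breaks_append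
      (hsub (List.mem_cons_of_mem _ (List.mem_map.2 ⟨d, hd, rfl⟩)))

end Refinement

section DescentComposition

variable {A : Type*}

theorem flatten_splitByComp (w : List A) (α : List ℕ) :
    (splitByComp w α).flatten = w.take α.sum := by
  induction α generalizing w with
  | nil => simp [splitByComp]
  | cons a α ih => rw [splitByComp, List.flatten_cons, ih, List.sum_cons, List.take_add]

theorem sum_zipWith_sub {a n : ℕ} {ds : List ℕ} (h : (a :: ds ++ [n]).Pairwise (· ≤ ·)) :
    (List.zipWith (fun a b => b - a) (a :: ds) (ds ++ [n])).sum = n - a := by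
  induction ds generalizing a with
  | nil => simp
  | cons d ds ih =>
    obtain ⟨ha, htail⟩ := List.pairwise_cons.1 h
    have had : a ≤ d := ha d (by simp)
    have hdn : d ≤ n := (List.pairwise_cons.1 htail).1 n (by simp)
    rw [List.cons_append, List.zipWith_cons_cons, List.sum_cons, ih htail]
    omega

theorem map_add_breaks_splitByComp {a n : ℕ} {ds : List ℕ} {w : List A}
    (hw : w.length = n - a) (h : (a :: ds ++ [n]).Pairwise (· ≤ ·)) :
    (breaks (splitByComp w (List.zipWith (fun a b => b - a) (a :: ds) (ds ++ [n])))).map (a + ·) =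
      a :: ds ++ [n] := by
  induction ds generalizing a w with
  | nil =>
    have han : a ≤ n := (List.pairwise_cons.1 h).1 n (by simp)
    simp [splitByComp, breaks, hw, han]
  | cons d ds ih =>
    obtain ⟨ha, htail⟩ := List.pairwise_cons.1 h
    have had : a ≤ d := ha d (by simp)
    have hdn : d ≤ n := (List.pairwise_cons.1 htail).1 n (by simp)
    have hstep : (a + ·) ∘ (d - a + ·) = (d + ·) := funext fun x => by
      simp only [Function.comp_apply]
      omega
    have hlen : min (d - a) w.length = d - a := by omega
    rw [List.cons_append, List.zipWith_cons_cons, splitByComp, breaks, List.length_take, hlen,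
      List.map_cons, List.map_map, hstep,
      ih (by rw [List.length_drop, hw]; omega) htail]
    simp

theorem pairwise_zero_cons_descList_append {U : Filling} (hn : nBoxes U ≠ 0) :
    (0 :: descList U ++ [nBoxes U]).Pairwise (· < ·) := by
  have hbound : ∀ d ∈ descList U, 0 < d ∧ d < nBoxes U := fun d hd => by
    obtain ⟨i, rfl, hi⟩ := exists_eq_succ_of_mem_descList hd
    exact ⟨i.succ_pos, hi⟩
  rw [List.cons_append, List.pairwise_cons, List.pairwise_append]
  refine ⟨fun d hd => ?_, List.Pairwise.filter _ List.pairwise_lt_range',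
    List.pairwise_singleton _ _, fun d hd n' hn' => ?_⟩
  · rcases List.mem_append.1 hd with hd | hd
    · exact (hbound d hd).1
    · exact List.mem_singleton.1 hd ▸ Nat.pos_of_ne_zero hn
  · exact List.mem_singleton.1 hn' ▸ (hbound d hd).2

variable [Inhabited A] {J I : Sentence A} {U : Filling}

theorem length_readWord (J : Sentence A) (U : Filling) : (readWord J U).length = nBoxes U := by
  simp [readWord]

theorem flatten_coA (J : Sentence A) (U : Filling) : (coA J U).flatten = readWord J U := by
  have hlen := length_readWord J U
  rw [coA]
  split_ifs with hn
  · rw [hn, List.length_eq_zero_iff] at hlen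
    exact hlen.symm
  · rw [flatten_splitByComp, compOf, sum_zipWith_sub
        ((pairwise_zero_cons_descList_append hn).imp le_of_lt),
      List.take_of_length_le (by omega)]

theorem breaks_coA (J : Sentence A) (hn : nBoxes U ≠ 0) :
    breaks (coA J U) = 0 :: descList U ++ [nBoxes U] := by
  have := map_add_breaks_splitByComp (length_readWord J U)
    ((pairwise_zero_cons_descList_append hn).imp le_of_lt)
  simpa [coA, hn, compOf] using this

theorem isSentence_coA (J : Sentence A) (U : Filling) : IsSentence (coA J U) := by
  by_cases hn : nBoxes U = 0
  · simp [coA, hn, IsSentence]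
  · exact isSentence_of_pairwise_breaks (breaks_coA J hn ▸ pairwise_zero_cons_descList_append hn)

theorem refines_coA_iff (hI : IsSentence I) :
    Refines I (coA J U) ↔ I.flatten = readWord J U ∧ descList U ⊆ breaks I := by
  rw [refines_iff (isSentence_coA J U) hI, flatten_coA]
  refine and_congr_right fun hflat => ?_
  by_cases hn : nBoxes U = 0
  · simp [coA, hn, breaks, descList, zero_mem_breaks]
  · have hlast : nBoxes U ∈ breaks I := by
      rw [← length_readWord J U, ← hflat]
      exact length_flatten_mem_breaks I
    simp [breaks_coA J hn, zero_mem_breaks, hlast]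

theorem size_coA (hU : U.map List.length = J.map List.length) : size (coA J U) = size J := by
  rw [size, ← List.length_flatten, flatten_coA, length_readWord, nBoxes, List.length_flatten, hU,
    size]

end DescentComposition

section Monomials

variable {A : Type*} {w : List A} {ws : Sentence A} {j : ℕ} {js : List ℕ} {m : Mono A}

theorem validMono_iff : ValidMono m ↔ m.1.length = m.2.length ∧ m.2.Pairwise (· < ·) ∧
    (∀ j ∈ m.2, 1 ≤ j) ∧ ∀ w ∈ m.1, w ≠ [] := by
  rw [← List.isChain_iff_pairwise]
  rfl

theorem validMono_cons : ValidMono (w :: ws, j :: js) ↔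
    (w ≠ [] ∧ 1 ≤ j ∧ ∀ k ∈ js, j < k) ∧ ValidMono (ws, js) := by
  simp only [validMono_iff, List.pairwise_cons, List.forall_mem_cons, List.length_cons,
    Nat.add_right_cancel_iff]
  tauto

@[elab_as_elim]
theorem validMono_induction {P : (m : Mono A) → ValidMono m → Prop} (nil : ∀ h, P ([], []) h)
    (cons : ∀ w ws j js (hw : w ≠ []) (hj : 1 ≤ j) (hlt : ∀ k ∈ js, j < k)
      (h : ValidMono (ws, js)), P (ws, js) h →
        P (w :: ws, j :: js) (validMono_cons.2 ⟨⟨hw, hj, hlt⟩, h⟩)) : ∀ m h, P m h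
  | ([], []), h => nil h
  | ([], _ :: _), h => absurd h.1 (by simp)
  | (_ :: _, []), h => absurd h.1 (by simp)
  | (w :: ws, j :: js), h =>
    have ⟨⟨hw, hj, hlt⟩, h'⟩ := validMono_cons.1 h
    cons w ws j js hw hj hlt h' (validMono_induction nil cons (ws, js) h')

/-- The variables `x_{a,i}` of a monomial, each recorded as the pair `(a, i)`, in the order in which
they are multiplied. -/
def factors (m : Mono A) : List (A × ℕ) :=
  (m.1.zip m.2).flatMap fun p => p.1.map (·, p.2)

theorem factors_cons : factors (w :: ws, j :: js) = w.map (·, j) ++ factors (ws, js) := rfl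

theorem snd_mem_of_mem_factors {p : A × ℕ} (hp : p ∈ factors m) : p.2 ∈ m.2 := by
  obtain ⟨q, hq, hpq⟩ := List.mem_flatMap.1 hp
  obtain ⟨a, _, rfl⟩ := List.mem_map.1 hpq
  exact (List.of_mem_zip hq).2

theorem ValidMono.map_fst_factors (hm : ValidMono m) :
    (factors m).map Prod.fst = m.1.flatten := by
  induction m, hm using validMono_induction with
  | nil => rfl
  | cons w ws j js _ _ _ _ ih => simp [factors_cons, ih, Function.comp_def]

theorem ValidMono.pairwise_snd_factors (hm : ValidMono m) :
    (factors m).Pairwise (·.2 ≤ ·.2) := by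
  induction m, hm using validMono_induction with
  | nil => exact List.Pairwise.nil
  | cons w ws j js _ _ hlt _ ih =>
    rw [factors_cons, List.pairwise_append]
    refine ⟨by simp [List.pairwise_map, List.pairwise_of_forall], ih, fun p hp q hq => ?_⟩
    obtain ⟨a, _, rfl⟩ := List.mem_map.1 hp
    exact (hlt _ (snd_mem_of_mem_factors hq)).le

theorem ValidMono.snd_factors_lt_iff (hm : ValidMono m) {i : ℕ}
    (hi : i + 1 < (factors m).length) :
    (factors m)[i].2 < (factors m)[i + 1].2 ↔ i + 1 ∈ breaks m.1 := by
  induction m, hm using validMono_induction generalizing i with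
  | nil => simp [factors] at hi
  | cons w ws j js _ _ hlt _ ih =>
    simp only [factors_cons, List.length_append, List.length_map] at hi
    simp only [factors_cons, List.getElem_append, List.length_map, List.getElem_map, breaks,
      List.mem_cons, List.mem_map, Nat.succ_ne_zero, false_or]
    rcases lt_trichotomy (i + 1) w.length with h | h | h
    · have hnot : ∀ k ∈ breaks ws, w.length + k ≠ i + 1 := by omega
      simpa [h, Nat.lt_of_succ_lt h] using hnot
    · have hhead := hlt _ (snd_mem_of_mem_factors (List.getElem_mem (l := factors (ws, js))
        (n := 0) (by omega)))
      simp [h, show i < w.length by omega, hhead, zero_mem_breaks]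
    · obtain ⟨k, rfl⟩ := Nat.exists_eq_add_of_le (Nat.le_of_lt_succ h)
      have := ih (i := k) (by omega)
      simp [Nat.add_assoc, this]

theorem filter_snd_factors_cons (h : ∀ k ∈ js, j < k) :
    (factors (w :: ws, j :: js)).filter (·.2 == j) = w.map (·, j) := by
  have htail : (factors (ws, js)).filter (·.2 == j) = [] := List.filter_eq_nil_iff.2 fun p hp => by
    simpa using (h _ (snd_mem_of_mem_factors hp)).ne'
  simp [factors_cons, htail, List.filter_map, Function.comp_def]

theorem ValidMono.factors_injOn : Set.InjOn (factors (A := A)) {m | ValidMono m} := by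
  intro m hm
  induction m, hm using validMono_induction with
  | nil =>
    intro m' hm' h
    induction m', hm' using validMono_induction with
    | nil => rfl
    | cons w ws j js hw => simp [factors, hw] at h
  | cons w ws j js hw _ hlt _ ih =>
    intro m' hm' h
    induction m', hm' using validMono_induction with
    | nil => simp [factors, hw] at h
    | cons w' ws' j' js' hw' _ hlt' hm' _ =>
      obtain rfl : j = j' := by
        obtain ⟨a, v, rfl⟩ := List.exists_cons_of_ne_nil hw
        obtain ⟨a', v', rfl⟩ := List.exists_cons_of_ne_nil hw'
        simp only [factors_cons, List.map_cons, List.cons_append, List.cons.injEq,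
          Prod.mk.injEq] at h
        exact h.1.2
      have hword : w.map (·, j) = w'.map (·, j) := by
        rw [← filter_snd_factors_cons (w := w) (ws := ws) hlt,
          ← filter_snd_factors_cons (w := w') (ws := ws') hlt', h]
      obtain rfl : w = w' := (Prod.mk_left_injective j).list_map hword
      obtain ⟨rfl, rfl⟩ := Prod.mk.inj (ih hm' (List.append_cancel_left h))
      rfl

end Monomials

section TableauMonomials

variable {α : Type*} {key : α → ℕ} {l : List α}

theorem filter_append_filter_not_of_pairwise {v : ℕ} (hl : l.Pairwise (key · ≤ key ·))
    (hmin : ∀ a ∈ l, v ≤ key a) : l.filter (key · == v) ++ l.filter (!key · == v) = l := by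
  induction l with
  | nil => rfl
  | cons a l ih =>
    obtain ⟨ha, hl⟩ := List.pairwise_cons.1 hl
    by_cases hav : key a = v
    · simpa [hav] using ih hl fun b hb => hmin b (List.mem_cons_of_mem a hb)
    · have hne : ∀ b ∈ a :: l, key b ≠ v := List.forall_mem_cons.2 ⟨hav, fun b hb =>
        (((hmin a List.mem_cons_self).lt_of_ne' hav).trans_le (ha b hb)).ne'⟩
      rw [List.filter_eq_nil_iff.2 fun b hb => by simpa using hne b hb,
        List.filter_eq_self.2 fun b hb => by simpa using hne b hb, List.nil_append]

theorem flatMap_filter_eq_self {vs : List ℕ} (hl : l.Pairwise (key · ≤ key ·))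
    (hvs : vs.Pairwise (· < ·)) (hmem : ∀ a ∈ l, key a ∈ vs) :
    (vs.flatMap fun v => l.filter (key · == v)) = l := by
  induction vs generalizing l with
  | nil => simpa [List.eq_nil_iff_forall_not_mem] using hmem
  | cons v vs ih =>
    obtain ⟨hv, hvs⟩ := List.pairwise_cons.1 hvs
    have hmin : ∀ a ∈ l, v ≤ key a := fun a ha =>
      (List.mem_cons.1 (hmem a ha)).elim (fun h => h.ge) fun h => (hv _ h).le
    have htail : (vs.flatMap fun v' => (l.filter (!key · == v)).filter (key · == v')) =
        l.filter (!key · == v) := ih (hl.filter _) hvs fun a ha => by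
      obtain ⟨hal, hav⟩ := List.mem_filter.1 ha
      exact (List.mem_cons.1 (hmem a hal)).resolve_left (by simpa using hav)
    have hsame : ∀ v' ∈ vs, (l.filter (!key · == v)).filter (key · == v') =
        l.filter (key · == v') := fun v' hv' => by
      have := hv v' hv'
      rw [List.filter_filter]
      exact List.filter_congr fun a _ => by grind
    rw [List.flatMap_cons, ← List.flatMap_congr hsame, htail,
      filter_append_filter_not_of_pairwise hl hmin]

/-- The boxes of a filling listed from the bottom row up, each row from left to right: the order in
which the definition of the type of a tableau reads them. -/
def boxesBottomUp (f : Filling) : List (ℕ × ℕ) :=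
  (List.range f.length).reverse.flatMap fun r =>
    (List.range (f.getD r []).length).map fun c => (r, c)

theorem boxesBottomUp_perm_boxes (f : Filling) : (boxesBottomUp f).Perm (boxes f) := by
  rw [boxesBottomUp, boxes, List.flatMap_def]
  exact ((List.reverse_perm _).map _).flatten

theorem pairwise_boxesBottomUp (f : Filling) :
    (boxesBottomUp f).Pairwise fun b b' => b'.1 < b.1 ∨ b.1 = b'.1 ∧ b.2 < b'.2 := by
  refine List.pairwise_flatMap.2 ⟨fun r _ => ?_, List.pairwise_reverse.2 ?_⟩
  · exact List.pairwise_map.2 (List.pairwise_lt_range.imp fun h => Or.inr ⟨rfl, h⟩)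
  · refine List.pairwise_lt_range.imp fun hlt b hb b' hb' => Or.inl ?_
    obtain ⟨_, _, rfl⟩ := List.mem_map.1 hb
    obtain ⟨_, _, rfl⟩ := List.mem_map.1 hb'
    exact hlt

theorem filter_boxesBottomUp (f : Filling) (v : ℕ) :
    (boxesBottomUp f).filter (entryAt f · == v) =
      (readingList f).filter (entryAt f · == v) := by
  refine (((boxesBottomUp_perm_boxes f).trans
    (readingList_perm_boxes f).symm).filter _).eq_of_pairwise
      (fun _ _ _ _ h h' => absurd h' (beforeB_asymm h)) ?_
      ((pairwise_beforeB_readingList f).filter _)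
  refine ((pairwise_boxesBottomUp f).filter _).imp_of_mem fun hb hb' h => ?_
  have hbv := beq_iff_eq.1 (List.mem_filter.1 hb).2
  have hbv' := beq_iff_eq.1 (List.mem_filter.1 hb').2
  exact beforeB_iff.2 (Or.inr ⟨hbv.trans hbv'.symm, h⟩)

theorem zip_eq_map_range {β γ : Type*} {l : List β} {l' : List γ} (h : l.length = l'.length)
    (d : β) (d' : γ) :
    l.zip l' = (List.range l'.length).map fun i => (l.getD i d, l'.getD i d') :=
  List.ext_getElem (by simp [h]) fun i hi _ => by
    have := List.length_zip ▸ hi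
    simp [show i < l.length by omega, show i < l'.length by omega]

variable {A : Type*} {J : Sentence A} {f : Filling} {v : ℕ}

theorem pairwise_snd_monoOf (J : Sentence A) (f : Filling) :
    (monoOf J f).2.Pairwise (· < ·) :=
  List.Pairwise.filter _ (List.pairwise_map.2 (List.pairwise_lt_range.imp Nat.succ_lt_succ))

variable [Inhabited A]

theorem typeWord_eq (hshape : f.map List.length = J.map List.length) (v : ℕ) :
    typeWord J f v = ((readingList f).filter (entryAt f · == v)).map (colorAt J) := by
  have hlen : J.length = f.length := by simpa using congrArg List.length hshape.symm
  rw [← filter_boxesBottomUp, typeWord, zip_eq_map_range hlen [] [], ← List.map_reverse,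
    List.map_map, ← List.flatMap_def, boxesBottomUp, List.filter_flatMap, List.map_flatMap]
  refine List.flatMap_congr fun r _ => ?_
  have hrow : (J.getD r []).length = (f.getD r []).length := by
    rw [length_getD, length_getD, hshape]
  simp only [Function.comp_apply, rowWith, zip_eq_map_range hrow default 0, List.filter_map,
    List.map_map]
  rfl

theorem typeWord_ne_nil_iff (hshape : f.map List.length = J.map List.length) :
    typeWord J f v ≠ [] ↔ v ∈ f.flatten := by
  rw [mem_flatten_iff_exists_box]
  simp [typeWord_eq hshape, List.filter_eq_nil_iff, mem_readingList]

theorem mem_snd_monoOf_iff (hshape : f.map List.length = J.map List.length) :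
    v ∈ (monoOf J f).2 ↔ 1 ≤ v ∧ v ∈ f.flatten := by
  have hle : v ∈ f.flatten → v ≤ maxEntry f := fun hv => List.le_max_of_le hv le_rfl
  have hrange : (∃ k < maxEntry f, k + 1 = v) ↔ 1 ≤ v ∧ v ≤ maxEntry f :=
    ⟨fun ⟨k, _, _⟩ => by omega, fun _ => ⟨v - 1, by omega, by omega⟩⟩
  have hword := typeWord_ne_nil_iff (v := v) hshape
  simp only [monoOf, List.mem_filter, List.mem_map, List.mem_range, hrange, Bool.not_eq_true',
    List.isEmpty_eq_false_iff, hword]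
  tauto

theorem validMono_monoOf (hshape : f.map List.length = J.map List.length) :
    ValidMono (monoOf J f) := by
  refine validMono_iff.2 ⟨by simp [monoOf], pairwise_snd_monoOf J f,
    fun v hv => ((mem_snd_monoOf_iff hshape).1 hv).1, fun w hw => ?_⟩
  obtain ⟨v, hv, rfl⟩ := List.mem_map.1 hw
  exact (typeWord_ne_nil_iff hshape).2 ((mem_snd_monoOf_iff hshape).1 hv).2

/-- The variables `x_{a,i}` contributed by the boxes of a filling of shape `J`, each recorded as the
pair `(a, i)`, in type-reading order. -/
def boxFactors (J : Sentence A) (f : Filling) : List (A × ℕ) :=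
  (readingList f).map fun b => (colorAt J b, entryAt f b)

theorem factors_monoOf (hshape : f.map List.length = J.map List.length)
    (hpos : ∀ b ∈ boxes f, 1 ≤ entryAt f b) : factors (monoOf J f) = boxFactors J f := by
  have hsorted : (boxFactors J f).Pairwise (·.2 ≤ ·.2) :=
    List.pairwise_map.2 (List.pairwise_map.1 (pairwise_entryAt_readingList f))
  have hmem : ∀ p ∈ boxFactors J f, p.2 ∈ (monoOf J f).2 := fun p hp => by
    obtain ⟨b, hb, rfl⟩ := List.mem_map.1 hp
    have hbox := mem_readingList.1 hb
    exact (mem_snd_monoOf_iff hshape).2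
      ⟨hpos b hbox, mem_flatten_iff_exists_box.2 ⟨b, hbox, rfl⟩⟩
  have hfilter : ∀ v, (typeWord J f v).map (·, v) = (boxFactors J f).filter (·.2 == v) := by
    intro v
    rw [typeWord_eq hshape, boxFactors, List.filter_map, List.map_map]
    refine List.map_congr_left fun b hb => ?_
    simp [beq_iff_eq.1 (List.mem_filter.1 hb).2]
  have hzip : ∀ vs : List ℕ, factors (vs.map (typeWord J f), vs) =
      vs.flatMap fun v => (boxFactors J f).filter (·.2 == v) := by
    intro vs
    induction vs with
    | nil => rfl
    | cons v vs ih => rw [List.map_cons, factors_cons, ih, hfilter, List.flatMap_cons]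
  exact (hzip _).trans (flatMap_filter_eq_self hsorted (pairwise_snd_monoOf J f) hmem)

theorem monoOf_eq_iff {m : Mono A} (hshape : f.map List.length = J.map List.length)
    (hpos : ∀ b ∈ boxes f, 1 ≤ entryAt f b) (hm : ValidMono m) :
    monoOf J f = m ↔ boxFactors J f = factors m := by
  rw [← factors_monoOf hshape hpos,
    ValidMono.factors_injOn.eq_iff (validMono_monoOf hshape) hm]

end TableauMonomials

section Destandardization

variable {A : Type*} [Inhabited A] {J : Sentence A} {T U : Filling} {m : Mono A}

/-- The filling obtained from a standard filling `U` by replacing each entry `i` with the `i`-th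
term of `l`, counting from one. It inverts standardization when `l` is the increasing list of
entries of a tableau. -/
def relabel (l : List ℕ) (U : Filling) : Filling :=
  U.map (List.map fun k => l.getD (k - 1) 0)

theorem relabel_shape (l : List ℕ) (U : Filling) :
    (relabel l U).map List.length = U.map List.length := by
  simp [relabel, Function.comp_def]

theorem entryAt_relabel (l : List ℕ) {b : ℕ × ℕ} (hb : b ∈ boxes U) :
    entryAt (relabel l U) b = l.getD (entryAt U b - 1) 0 :=
  entryAt_map _ hb

theorem IsStandardF.map_entryAt_relabel (hU : IsStandardF U) {l : List ℕ}
    (hl : l.length = (readingList U).length) :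
    (readingList U).map (entryAt (relabel l U)) = l := by
  refine List.ext_getElem (by simp [hl]) fun i _ hi => ?_
  have hiU : i < (readingList U).length := hl ▸ hi
  rw [List.getElem_map, entryAt_relabel l (mem_readingList.1 (List.getElem_mem hiU)),
    hU.entryAt_getElem_readingList hiU, Nat.add_sub_cancel, List.getD_eq_getElem _ _ hi]

theorem readingList_eq_iff_refines_coA (hC : IsCIT J U) (hU : IsStandardF U)
    (hshape : T.map List.length = U.map List.length) (hm : ValidMono m)
    (hfactors : (readingList U).map (fun b => (colorAt J b, entryAt T b)) = factors m) :
    readingList T = readingList U ↔ Refines m.1 (coA J U) := by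
  have hlen : (factors m).length = (readingList U).length := by rw [← hfactors, List.length_map]
  have hentry : ∀ i (hi : i < (readingList U).length),
      entryAt T (readingList U)[i] = ((factors m)[i]'(hlen ▸ hi)).2 := fun i hi => by
    simp [← hfactors]
  have hflat : m.1.flatten = readWord J U := by
    rw [hU.readWord_eq, ← hm.map_fst_factors, ← hfactors, List.map_map]
    rfl
  rw [readingList_eq_iff hC hU hshape, refines_coA_iff hm.2.2.2, and_iff_right hflat]
  constructor
  · intro h d hd
    obtain ⟨i, rfl, hi⟩ := exists_eq_succ_of_mem_descList hd
    rw [← length_readingList] at hi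
    have hlt := (h i hi).2 hd
    rw [hentry, hentry] at hlt
    exact (hm.snd_factors_lt_iff (hlen ▸ hi)).1 hlt
  · intro h i hi
    rw [hentry, hentry, hm.snd_factors_lt_iff (hlen ▸ hi)]
    exact ⟨List.pairwise_iff_getElem.1 hm.pairwise_snd_factors _ _ _ _ i.lt_succ_self,
      fun hd => h hd⟩

theorem IsCIT.refines_coA_stdFill (hT : IsCIT J T) :
    Refines (monoOf J T).1 (coA J (stdFill T)) := by
  refine (readingList_eq_iff_refines_coA ((isCIT_stdFill_iff hT.one_le_entryAt).2 hT)
    (isStandardF_stdFill T) (stdFill_shape T).symm (validMono_monoOf hT.1) ?_).1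
      (readingList_stdFill T).symm
  rw [readingList_stdFill, factors_monoOf hT.1 hT.one_le_entryAt, boxFactors]

theorem injOn_stdFill (J : Sentence A) (m : Mono A) :
    Set.InjOn stdFill {T | IsCIT J T ∧ monoOf J T = m} := by
  rintro T ⟨hT, hTm⟩ T' ⟨hT', hTm'⟩ h
  have hshape : T.map List.length = T'.map List.length := hT.1.trans hT'.1.symm
  have hlist : readingList T = readingList T' := by
    rw [← readingList_stdFill, h, readingList_stdFill]
  have hfactors : boxFactors J T = boxFactors J T' := by
    rw [← factors_monoOf hT.1 hT.one_le_entryAt, ← factors_monoOf hT'.1 hT'.one_le_entryAt,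
      hTm, hTm']
  have hentries := congrArg (List.map Prod.snd) hfactors
  rw [boxFactors, boxFactors, List.map_map, List.map_map, ← hlist] at hentries
  exact ext_of_map_entryAt_readingList rfl hshape hentries

theorem exists_stdFill_eq (hC : IsCIT J U) (hU : IsStandardF U) (hm : ValidMono m)
    (href : Refines m.1 (coA J U)) : ∃ T, (IsCIT J T ∧ monoOf J T = m) ∧ stdFill T = U := by
  have hcolors : (factors m).map Prod.fst = (readingList U).map (colorAt J) := by
    rw [hm.map_fst_factors, ← hU.readWord_eq, href.flatten_eq, flatten_coA]
  have hlen : (factors m).length = (readingList U).length := by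
    simpa using congrArg List.length hcolors
  let T := relabel ((factors m).map Prod.snd) U
  have hshape : T.map List.length = U.map List.length := relabel_shape _ U
  have hentries : (readingList U).map (entryAt T) = (factors m).map Prod.snd :=
    hU.map_entryAt_relabel (by simpa using hlen)
  have hfactors : (readingList U).map (fun b => (colorAt J b, entryAt T b)) = factors m := by
    rw [← List.zip_map', hentries, ← hcolors, ← List.zip_of_prod rfl rfl]
  have hlist : readingList T = readingList U :=
    (readingList_eq_iff_refines_coA hC hU hshape hm hfactors).2 href
  have hstd : stdFill T = U := stdFill_eq_of_readingList_eq hU hshape hlist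
  have hpos : ∀ b ∈ boxes T, 1 ≤ entryAt T b := fun b hb => by
    have hmem : entryAt T b ∈ (factors m).map Prod.snd :=
      hentries ▸ List.mem_map_of_mem (hlist ▸ mem_readingList.2 hb)
    obtain ⟨p, hp, hpb⟩ := List.mem_map.1 hmem
    exact hpb ▸ hm.2.2.1 _ (snd_mem_of_mem_factors hp)
  refine ⟨T, ⟨(isCIT_stdFill_iff hpos).1 (hstd.symm ▸ hC), ?_⟩, hstd⟩
  rw [monoOf_eq_iff (hshape.trans hC.1) hpos hm, boxFactors, hlist, hfactors]

theorem bijOn_stdFill (J : Sentence A) (m : Mono A) :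
    Set.BijOn stdFill {T | IsCIT J T ∧ monoOf J T = m}
      {U | (IsCIT J U ∧ IsStandardF U) ∧ Refines m.1 (coA J U) ∧ ValidMono m} := by
  refine ⟨?_, injOn_stdFill J m, fun U ⟨⟨hC, hU⟩, href, hm⟩ => exists_stdFill_eq hC hU hm href⟩
  rintro T ⟨hT, rfl⟩
  exact ⟨⟨(isCIT_stdFill_iff hT.one_le_entryAt).2 hT, isStandardF_stdFill T⟩,
    hT.refines_coA_stdFill, validMono_monoOf hT.1⟩

end Destandardization

section Expansion

variable {A : Type*}

theorem finite_setOf_isSentence_flatten_eq (w : List A) :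
    {I : Sentence A | IsSentence I ∧ I.flatten = w}.Finite := by
  refine (Set.finite_range fun c : Composition w.length => w.splitWrtComposition c).subset ?_
  rintro I ⟨hI, rfl⟩
  refine ⟨⟨I.map List.length, fun hn => ?_, (List.length_flatten).symm⟩,
    List.splitWrtComposition_flatten _ _ rfl⟩
  obtain ⟨w, hw, rfl⟩ := List.mem_map.1 hn
  exact List.length_pos_iff.2 (hI w hw)

theorem isSentence_of_MQ_ne_zero {I : Sentence A} (h : MQ I ≠ 0) : IsSentence I := by
  by_contra hI
  exact h (funext fun m => if_neg fun ⟨hm, hvalid⟩ => hI (hm ▸ hvalid.2.2.2))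

open Classical in
theorem FQ_apply (C : Sentence A) (m : Mono A) :
    FQ C m = if Refines m.1 C ∧ ValidMono m then 1 else 0 := by
  have hfin : ({I : Sentence A | Refines I C} ∩ Function.support MQ).Finite :=
    (finite_setOf_isSentence_flatten_eq C.flatten).subset fun I hI =>
      ⟨isSentence_of_MQ_ne_zero hI.2, hI.1.flatten_eq⟩
  have hmem (hm : ValidMono m) : m.1 ∈ hfin.toFinset ↔ Refines m.1 C := by
    have hne : MQ m.1 ≠ 0 := fun h => by simpa [MQ, hm] using congrFun h m
    simp [hne]
  rw [FQ, finsum_mem_eq_sum _ hfin, Finset.sum_apply]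
  by_cases hm : ValidMono m
  · simp only [MQ, hm, and_true, Finset.sum_ite_eq, hmem hm]
  · simp [MQ, hm]

theorem finite_setOf_isCIT_isStandardF (J : Sentence A) :
    {U : Filling | IsCIT J U ∧ IsStandardF U}.Finite := by
  refine Set.Finite.of_finite_image (f := List.flatten) ?_ fun U hU V hV h =>
    List.eq_iff_flatten_eq.2 ⟨h, hU.1.1.trans hV.1.1.symm⟩
  refine ((List.range' 1 (size J)).permutations.finite_toSet).subset ?_
  rintro _ ⟨U, ⟨hC, hU⟩, rfl⟩
  have hn : nBoxes U = size J := by rw [nBoxes, List.length_flatten, hC.1, size]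
  exact List.mem_permutations.2 (hn ▸ hU)

variable [Inhabited A]

theorem dualImm_eq_finsum_FQ_coA (J : Sentence A) :
    dualImm J = ∑ᶠ U ∈ {U : Filling | IsCIT J U ∧ IsStandardF U}, FQ (coA J U) := by
  classical
  have hfin := finite_setOf_isCIT_isStandardF J
  rw [finsum_mem_eq_finite_toFinset_sum _ hfin]
  funext m
  simp only [Finset.sum_apply, FQ_apply, Finset.sum_boole]
  rw [dualImm, (bijOn_stdFill J m).ncard_eq, ← Set.ncard_coe_finset]
  simp

theorem LJC_eq_card_filter [DecidableEq (Sentence A)] (J C : Sentence A) :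
    LJC J C =
      ((finite_setOf_isCIT_isStandardF J).toFinset.filter (coA J · = C)).card := by
  rw [LJC, ← Set.ncard_coe_finset]
  simp [and_assoc]

theorem finsum_LJC_smul_FQ (J : Sentence A) :
    ∑ᶠ C ∈ {C : Sentence A | IsSentence C ∧ size C = size J}, (LJC J C : ℚ) • FQ C =
      ∑ᶠ U ∈ {U : Filling | IsCIT J U ∧ IsStandardF U}, FQ (coA J U) := by
  classical
  have hfin := finite_setOf_isCIT_isStandardF J
  have himage : ({C : Sentence A | IsSentence C ∧ size C = size J} ∩
      Function.support fun C => (LJC J C : ℚ) • FQ C) =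
      (hfin.toFinset.image (coA J) : Set (Sentence A)) ∩
        Function.support fun C => (LJC J C : ℚ) • FQ C := by
    ext C
    refine and_congr_left fun hC => ⟨fun _ => ?_, fun h => ?_⟩
    · have hne : LJC J C ≠ 0 := fun h => hC (by simp [h])
      rw [LJC_eq_card_filter, Finset.card_ne_zero] at hne
      obtain ⟨U, hU⟩ := hne
      exact Finset.mem_image.2 ⟨U, Finset.mem_filter.1 hU⟩
    · obtain ⟨U, hU, rfl⟩ := Finset.mem_image.1 h
      exact ⟨isSentence_coA J U, size_coA (hfin.mem_toFinset.1 hU).1.1⟩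
  rw [finsum_mem_eq_sum_of_inter_support_eq _ himage, finsum_mem_eq_finite_toFinset_sum _ hfin,
    Finset.sum_comp FQ (coA J)]
  simp only [LJC_eq_card_filter, Nat.cast_smul_eq_nsmul]

end Expansion

/-- The colored dual immaculate function expands positively into the
colored fundamental basis: `𝔖*_J = Σ_C L_{J,C} F_C`, summed over sentences `C` with
`|C| = |J|`; equivalently `𝔖*_J = Σ_U F_{co_A(U)}`, summed over all standard colored
immaculate tableaux `U` of shape `J`. -/
theorem statement6 {A : Type*} [Inhabited A] (J : Sentence A) (hJ : IsSentence J) :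
    (dualImm J =
      ∑ᶠ C ∈ {C : Sentence A | IsSentence C ∧ size C = size J}, (LJC J C : ℚ) • FQ C) ∧
    (dualImm J = ∑ᶠ U ∈ {f : Filling | IsCIT J f ∧ IsStandardF f}, FQ (coA J U)) := by
  rw [dualImm_eq_finsum_FQ_coA, finsum_LJC_smul_FQ]
  exact ⟨rfl, rfl⟩

end ColoredImm
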